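/- Let f : ℝⁿ → ℝ, let τ > 0, and let r : ℝⁿ → ℝ be separable, r(x) = Σᵢ rᵢ(xᵢ), where each rᵢ : ℝ → ℝ is convex, satisfies rᵢ(0) = 0, rᵢ(t) ≥ 0 for all t ≥ 0, and is symmetric, i.e., rᵢ(t) = rᵢ(−t) for all t ∈ ℝ. Define g̃(y,z) = f(y − z) + τ·Σᵢ(yᵢ + zᵢ) + r(y) + r(z). If (y*, z*) minimizes g̃ over the set {(y,z) : y ≥ 0, z ≥ 0}, then yᵢ* zᵢ* = 0 for every i, and x* := y* − z* minimizes f(x) + τ‖x‖₁ + r(x) over all x ∈ ℝⁿ. -/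

import Mathlib

/-!
For nonnegative `y` and `z`, the identity `y + z = |y - z| + 2 min y z` shows that the split
objective at `(y, z)` exceeds the `ℓ¹`-regularized objective at `y - z` by at least
`2 τ ∑ᵢ min yᵢ zᵢ`. The two objectives agree when `(y, z) = (x⁺, x⁻)`. Comparing a minimizer of the
split objective with `(x⁺, x⁻)` gives optimality of `y - z`, and the choice `x = y - z` forces
`∑ᵢ min yᵢ zᵢ = 0`.
-/

section EvenFunctions

theorem apply_posPart_add_apply_negPart {G M : Type*} [AddCommGroup G] [LinearOrder G]
    [IsOrderedAddMonoid G] [AddMonoid M] {ρ : G → M} (h_even : ρ.Even) (h_zero : ρ 0 = 0)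
    (x : G) : ρ x⁺ + ρ x⁻ = ρ x := by
  rcases le_total 0 x with hx | hx
  · rw [posPart_eq_self.2 hx, negPart_eq_zero.2 hx, h_zero, add_zero]
  · rw [posPart_eq_zero.2 hx, negPart_eq_neg.2 hx, h_zero, zero_add, h_even]

variable {𝕜 β : Type*} [Field 𝕜] [LinearOrder 𝕜] [IsStrictOrderedRing 𝕜] {ρ : 𝕜 → β}

theorem quasiconvexOn_univ_even_le_of_abs_le [Preorder β] (h_qconv : QuasiconvexOn 𝕜 Set.univ ρ)
    (h_even : ρ.Even) {s t : 𝕜} (hst : |s| ≤ t) : ρ s ≤ ρ t :=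
  ((h_qconv (ρ t)).ordConnected.out ⟨trivial, (h_even t).le⟩ ⟨trivial, le_rfl⟩
    (abs_le.1 hst)).2

theorem quasiconvexOn_univ_even_sub_le_add [AddCommMonoid β] [PartialOrder β]
    [IsOrderedAddMonoid β] (h_qconv : QuasiconvexOn 𝕜 Set.univ ρ) (h_even : ρ.Even)
    (h_zero : ρ 0 = 0) {s t : 𝕜} (hs : 0 ≤ s) (ht : 0 ≤ t) : ρ (s - t) ≤ ρ s + ρ t := by
  have h_mono {u v : 𝕜} : |u| ≤ v → ρ u ≤ ρ v :=
    quasiconvexOn_univ_even_le_of_abs_le h_qconv h_even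
  have h_nonneg {u : 𝕜} (hu : 0 ≤ u) : 0 ≤ ρ u := h_zero ▸ h_mono (abs_zero.trans_le hu)
  rcases le_total t s with hts | hst
  · have h_abs : |s - t| ≤ s := abs_sub_le_of_nonneg_of_le hs le_rfl ht hts
    exact le_add_of_le_of_nonneg (h_mono h_abs) (h_nonneg ht)
  · have h_abs : |s - t| ≤ t := abs_sub_le_of_nonneg_of_le hs hst ht le_rfl
    exact le_add_of_nonneg_of_le (h_nonneg hs) (h_mono h_abs)

end EvenFunctions

section Objectives

variable {ι : Type*} [Fintype ι]

/-- The `ℓ¹`-regularized objective `f(x) + τ‖x‖₁ + r(x)` with separable `r(x) = ∑ᵢ rᵢ(xᵢ)`. The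
`ℓ¹` norm is written out as a sum, since the norm on `ι → ℝ` is the sup norm. -/
def l1Objective (f : (ι → ℝ) → ℝ) (τ : ℝ) (r : ι → ℝ → ℝ) (x : ι → ℝ) : ℝ :=
  f x + τ * ∑ i, |x i| + ∑ i, r i (x i)

/-- The objective `g̃(y, z) = f(y - z) + τ ∑ᵢ (yᵢ + zᵢ) + r(y) + r(z)`, obtained by splitting
`x = y - z` so that the nonsmooth term `‖x‖₁` becomes linear on the nonnegative orthant. -/
def splitObjective (f : (ι → ℝ) → ℝ) (τ : ℝ) (r : ι → ℝ → ℝ) (y z : ι → ℝ) : ℝ :=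
  f (y - z) + τ * ∑ i, (y i + z i) + ∑ i, r i (y i) + ∑ i, r i (z i)

variable {f : (ι → ℝ) → ℝ} {τ : ℝ} {r : ι → ℝ → ℝ} {y z : ι → ℝ}

theorem splitObjective_posPart_negPart (h_even : ∀ i, (r i).Even) (h_zero : ∀ i, r i 0 = 0)
    (x : ι → ℝ) : splitObjective f τ r x⁺ x⁻ = l1Objective f τ r x := by
  simp only [splitObjective, l1Objective, posPart_sub_negPart, Pi.posPart_apply,
    Pi.negPart_apply, posPart_add_negPart, add_assoc, ← Finset.sum_add_distrib,
    apply_posPart_add_apply_negPart (h_even _) (h_zero _)]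

theorem l1Objective_sub_add_sum_min_le_splitObjective
    (h_sub : ∀ i (s t : ℝ), 0 ≤ s → 0 ≤ t → r i (s - t) ≤ r i s + r i t)
    (hy : 0 ≤ y) (hz : 0 ≤ z) :
    l1Objective f τ r (y - z) + 2 * τ * ∑ i, min (y i) (z i) ≤ splitObjective f τ r y z := by
  have h_reg : ∑ i, r i (y i - z i) ≤ ∑ i, r i (y i) + ∑ i, r i (z i) := by
    rw [← Finset.sum_add_distrib]
    exact Finset.sum_le_sum fun i _ ↦ h_sub i _ _ (hy i) (hz i)
  have h_l1 : ∑ i, (y i + z i) = ∑ i, |y i - z i| + 2 * ∑ i, min (y i) (z i) := by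
    rw [Finset.mul_sum, ← Finset.sum_add_distrib]
    refine Finset.sum_congr rfl fun i _ ↦ ?_
    linarith [min_add_max (y i) (z i), max_sub_min_eq_abs' (y i) (z i)]
  simp only [l1Objective, splitObjective, Pi.sub_apply, h_l1]
  linarith

theorem splitObjective_le_l1Objective_of_isMinOn (h_even : ∀ i, (r i).Even)
    (h_zero : ∀ i, r i 0 = 0)
    (h_min : IsMinOn (fun p : (ι → ℝ) × (ι → ℝ) ↦ splitObjective f τ r p.1 p.2)
      (Set.Ici 0) (y, z))
    (x : ι → ℝ) : splitObjective f τ r y z ≤ l1Objective f τ r x := by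
  rw [← splitObjective_posPart_negPart h_even h_zero x]
  exact isMinOn_iff.1 h_min (x⁺, x⁻) ⟨posPart_nonneg x, negPart_nonneg x⟩

theorem stmt_2_general (hτ : 0 < τ) (h_even : ∀ i, (r i).Even) (h_zero : ∀ i, r i 0 = 0)
    (h_sub : ∀ i (s t : ℝ), 0 ≤ s → 0 ≤ t → r i (s - t) ≤ r i s + r i t)
    (hy : 0 ≤ y) (hz : 0 ≤ z)
    (h_min : IsMinOn (fun p : (ι → ℝ) × (ι → ℝ) ↦ splitObjective f τ r p.1 p.2)
      (Set.Ici 0) (y, z)) :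
    (∀ i, y i * z i = 0) ∧ ∀ x, l1Objective f τ r (y - z) ≤ l1Objective f τ r x := by
  have h_le := splitObjective_le_l1Objective_of_isMinOn h_even h_zero h_min
  have h_gap := l1Objective_sub_add_sum_min_le_splitObjective (f := f) (τ := τ) h_sub hy hz
  have h_min_nonneg : ∀ i ∈ Finset.univ, 0 ≤ min (y i) (z i) := fun i _ ↦ le_min (hy i) (hz i)
  have h_sum_nonneg := Finset.sum_nonneg h_min_nonneg
  refine ⟨fun i ↦ ?_, fun x ↦ ?_⟩
  · have h_sum_nonpos : ∑ i, min (y i) (z i) ≤ 0 :=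
      nonpos_of_mul_nonpos_right (by linarith [h_le (y - z)]) (by positivity : 0 < 2 * τ)
    have h_min_zero : min (y i) (z i) = 0 :=
      (Finset.sum_eq_zero_iff_of_nonneg h_min_nonneg).1
        (h_sum_nonpos.antisymm h_sum_nonneg) i (Finset.mem_univ i)
    rw [← min_mul_max, h_min_zero, zero_mul]
  · calc l1Objective f τ r (y - z)
      _ ≤ l1Objective f τ r (y - z) + 2 * τ * ∑ i, min (y i) (z i) :=
        le_add_of_nonneg_right (by positivity)
      _ ≤ splitObjective f τ r y z := h_gap
      _ ≤ l1Objective f τ r x := h_le x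

end Objectives

/-- Symmetric-`rᵢ` variant of Lemma 1: with each `rᵢ` convex, `rᵢ(0) = 0`,
`rᵢ(t) ≥ 0` for `t ≥ 0`, and `rᵢ(t) = rᵢ(-t)`, if `(y*, z*)` minimizes
`g̃(y,z) = f(y-z) + τ·Σᵢ(yᵢ+zᵢ) + r(y) + r(z)` over `{(y,z) : y ≥ 0, z ≥ 0}`,
then `yᵢ* zᵢ* = 0` for all `i`, and `x* := y* - z*` minimizes
`f(x) + τ‖x‖₁ + r(x)` over `ℝⁿ`. -/
theorem stmt_2 (n : ℕ) (f : (Fin n → ℝ) → ℝ) (τ : ℝ) (hτ : 0 < τ)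
    (r : Fin n → ℝ → ℝ)
    (hconv : ∀ i, ConvexOn ℝ Set.univ (r i))
    (hzero : ∀ i, r i 0 = 0)
    (hnonneg : ∀ i (t : ℝ), 0 ≤ t → 0 ≤ r i t)
    (hsymm : ∀ i (t : ℝ), r i t = r i (-t))
    (gt : (Fin n → ℝ) → (Fin n → ℝ) → ℝ)
    (hgt : ∀ y z, gt y z =
      f (y - z) + τ * (∑ i, (y i + z i)) + (∑ i, r i (y i)) + (∑ i, r i (z i)))
    (F : (Fin n → ℝ) → ℝ)
    (hF : ∀ x, F x = f x + τ * (∑ i, |x i|) + (∑ i, r i (x i)))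
    (ystar zstar : Fin n → ℝ)
    (hy : ∀ i, 0 ≤ ystar i) (hz : ∀ i, 0 ≤ zstar i)
    (hmin : ∀ y z : Fin n → ℝ, (∀ i, 0 ≤ y i) → (∀ i, 0 ≤ z i) →
      gt ystar zstar ≤ gt y z) :
    (∀ i, ystar i * zstar i = 0) ∧ (∀ x : Fin n → ℝ, F (ystar - zstar) ≤ F x) := by
  obtain rfl : gt = splitObjective f τ r := funext₂ hgt
  obtain rfl : F = l1Objective f τ r := funext hF
  have h_even (i : Fin n) : (r i).Even := fun t ↦ (hsymm i t).symm
  exact stmt_2_general hτ h_even hzero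
    (fun i _ _ ↦ quasiconvexOn_univ_even_sub_le_add (hconv i).quasiconvexOn (h_even i) (hzero i))
    hy hz (isMinOn_iff.2 fun p hp ↦ hmin p.1 p.2 hp.1 hp.2)
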